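/- Marginalization preserves the E-separation model: let G = (V, E_d) be a directed graph, V = V_obs ⊔ V_lat a partition of its nodes, A, B, C ⊆ V_obs with A ∩ C = ∅, and let G′ = (V_obs, E_d′, E_bi′) be the latent projection of G on V_obs. Then (A, B, C) ∈ I_E^G if and only if (A, B, C) ∈ I_E^{G′}. -/

import Mathlib

namespace ESepPaper

/-- A directed mixed graph: directed edges and bidirected edges over a node type `V`.
A directed graph (DG) is a DMG with `Ebi = ∅`. -/
structure DMG (V : Type) where
  Ed : Set (V × V)
  Ebi : Set (Sym2 V)

variable {V : Type}

/-- `G.ancestor u v` : there is a directed path `u → … → v` (possibly trivial). -/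
def DMG.ancestor (G : DMG V) : V → V → Prop :=
  Relation.ReflTransGen (fun u v => (u, v) ∈ G.Ed)

/-- Ancestors of a set `C`. -/
def DMG.anc (G : DMG V) (C : Set V) : Set V := {u | ∃ v ∈ C, G.ancestor u v}

/-- Strongly connected component of `v`. -/
def DMG.scc (G : DMG V) (v : V) : Set V := {w | G.ancestor w v ∧ G.ancestor v w}

/-- Parents of a set of nodes. -/
def DMG.pa (G : DMG V) (S : Set V) : Set V := {w | ∃ v ∈ S, (w, v) ∈ G.Ed}

/-- Kind of a traversed edge on a walk: forward directed, backward directed, or bidirected. -/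
inductive LinkType | fwd | bwd | bi
deriving DecidableEq

/-- Validity of a link of kind `t` between consecutive walk nodes `u` and `v`. -/
def DMG.linkOK (G : DMG V) (u v : V) : LinkType → Prop
  | .fwd => (u, v) ∈ G.Ed
  | .bwd => (v, u) ∈ G.Ed
  | .bi => s(u, v) ∈ G.Ebi

/-- Arrowhead at the second (right) endpoint of the link. -/
def LinkType.headR : LinkType → Prop
  | .fwd => True
  | .bwd => False
  | .bi => True

/-- Arrowhead at the first (left) endpoint of the link. -/
def LinkType.headL : LinkType → Prop
  | .fwd => False
  | .bwd => True
  | .bi => True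

/-- Tail at the second (right) endpoint. -/
def LinkType.tailR (t : LinkType) : Prop := t = .bwd

/-- Tail at the first (left) endpoint. -/
def LinkType.tailL (t : LinkType) : Prop := t = .fwd

/-- Walks in a DMG. -/
inductive DMG.Walk (G : DMG V) : V → V → Type
  | nil (v : V) : DMG.Walk G v v
  | cons {u v w : V} (t : LinkType) (h : G.linkOK u v t) (p : DMG.Walk G v w) : DMG.Walk G u w

/-- An interior node on a walk, whose incoming link is `t1` and outgoing link is `t2`,
is a collider iff both links have an arrowhead at it. -/
def colliderAt (t1 t2 : LinkType) : Prop := t1.headR ∧ t2.headL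

/-- An interior non-collider `v` between neighbours `u` (incoming link `t1`) and `w`
(outgoing link `t2`) is unblockable: on every side where the link has a tail at `v`, the
corresponding neighbour lies in `scc_G(v)` (left-chain/right-chain/fork cases). -/
def unblockableAt (G : DMG V) (u v w : V) (t1 t2 : LinkType) : Prop :=
  (t1.tailR → u ∈ G.scc v) ∧ (t2.tailL → w ∈ G.scc v)

namespace DMG.Walk

variable {G : DMG V}

/-- First node of a walk. -/
def first {a b : V} (_ : G.Walk a b) : V := a

def length : {a b : V} → G.Walk a b → ℕ
  | _, _, .nil _ => 0
  | _, _, .cons _ _ p => p.length + 1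

def support : {a b : V} → G.Walk a b → List V
  | a, _, .nil _ => [a]
  | a, _, .cons _ _ p => a :: p.support

/-- Auxiliary: σ-openness of the remainder of a walk, where `u` is the previous node and
`t1` the link from `u` into the current first node. -/
def sigmaOpenAux (C : Set V) : (u : V) → LinkType → {b c : V} → G.Walk b c → Prop
  | _, _, _, _, .nil _ => True
  | u, t1, v, _, .cons t2 _ q =>
      ((colliderAt t1 t2 → v ∈ G.anc C) ∧
       (¬ colliderAt t1 t2 → ¬ unblockableAt G u v q.first t1 t2 → v ∉ C)) ∧
      sigmaOpenAux C v t2 q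

/-- The walk is σ-open given `C`: every collider on it is an ancestor of a node of `C`, and
no blockable non-collider on it lies in `C`. -/
def sigmaOpen (C : Set V) : {a b : V} → G.Walk a b → Prop
  | _, _, .nil _ => True
  | a, _, .cons t _ q => sigmaOpenAux C a t q

/-- All links are forward directed. -/
def IsDirected : {a b : V} → G.Walk a b → Prop
  | _, _, .nil _ => True
  | _, _, .cons t _ p => t = .fwd ∧ p.IsDirected

/-- Interior nodes of the walk (all nodes except the two endpoints). -/
def interior {a b : V} (p : G.Walk a b) : List V := p.support.tail.dropLast

/-- Arrowhead at the first endpoint. -/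
def headAtStart : {a b : V} → G.Walk a b → Prop
  | _, _, .nil _ => False
  | _, _, .cons t _ _ => t.headL

def headAtEndAux : LinkType → {a b : V} → G.Walk a b → Prop
  | t, _, _, .nil _ => t.headR
  | _, _, _, .cons t _ q => headAtEndAux t q

/-- Arrowhead at the last endpoint. -/
def headAtEnd : {a b : V} → G.Walk a b → Prop
  | _, _, .nil _ => False
  | _, _, .cons t _ q => headAtEndAux t q

def noCollidersAux : LinkType → {a b : V} → G.Walk a b → Prop
  | _, _, _, .nil _ => True
  | t1, _, _, .cons t2 _ q => ¬ colliderAt t1 t2 ∧ noCollidersAux t2 q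

/-- There is no collider on the walk. -/
def NoColliders : {a b : V} → G.Walk a b → Prop
  | _, _, .nil _ => True
  | _, _, .cons t _ q => noCollidersAux t q

def collidersInAux (S : Set V) : LinkType → {a b : V} → G.Walk a b → Prop
  | _, _, _, .nil _ => True
  | t1, v, _, .cons t2 _ q => (colliderAt t1 t2 → v ∈ S) ∧ collidersInAux S t2 q

/-- Every collider on the walk lies in `S`. -/
def CollidersIn (S : Set V) : {a b : V} → G.Walk a b → Prop
  | _, _, .nil _ => True
  | _, _, .cons t _ q => collidersInAux S t q

def noncollUnblAux : (u : V) → LinkType → {b c : V} → G.Walk b c → Prop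
  | _, _, _, _, .nil _ => True
  | u, t1, v, _, .cons t2 _ q =>
      (¬ colliderAt t1 t2 → unblockableAt G u v q.first t1 t2) ∧ noncollUnblAux v t2 q

/-- Every interior non-collider on the walk is unblockable. -/
def NoncollidersUnblockable : {a b : V} → G.Walk a b → Prop
  | _, _, .nil _ => True
  | a, _, .cons t _ q => noncollUnblAux a t q

/-- The set of edges occurring on a walk (directed edges as ordered pairs in `E_d`,
bidirected edges as unordered pairs). -/
def edges : {a b : V} → G.Walk a b → Set ((V × V) ⊕ Sym2 V)
  | _, _, .nil _ => ∅
  | a, _, .cons t _ p =>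
      insert (match t with
        | .fwd => Sum.inl (a, p.first)
        | .bwd => Sum.inl (p.first, a)
        | .bi => Sum.inr s(a, p.first)) p.edges

/-- Concatenation of walks. -/
def append : {a b c : V} → G.Walk a b → G.Walk b c → G.Walk a c
  | _, _, _, .nil _, q => q
  | _, _, _, .cons t h p, q => .cons t h (p.append q)

/-- A walk `v_0, …, v_{n+1}` is a path if no node besides the final endpoint occurs more
than once, i.e. `v_0, …, v_n` are pairwise distinct. -/
def IsPath {a b : V} (p : G.Walk a b) : Prop := p.support.dropLast.Nodup

end DMG.Walk

/-- `A` is σ-separated from `B` given `C` in `G`: every walk from a node of `A` to a node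
of `B` is σ-blocked given `C`. -/
def DMG.sigmaSep (G : DMG V) (A B C : Set V) : Prop :=
  ∀ a ∈ A, ∀ b ∈ B, ∀ p : G.Walk a b, ¬ p.sigmaOpen C

/-- The lifted dependency graph of `G`, on two copies of `V`
(`Sum.inl` is the past copy `V_0`, `Sum.inr` the future copy `V_1`). -/
def DMG.lift (G : DMG V) : DMG (V ⊕ V) where
  Ed := {e | ∃ u v, (u, v) ∈ G.Ed ∧
        (e = (Sum.inl u, Sum.inl v) ∨ e = (Sum.inl u, Sum.inr v) ∨
         e = (Sum.inr u, Sum.inr v))}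
  Ebi := {e | ∃ u v, s(u, v) ∈ G.Ebi ∧
        (e = s(Sum.inl u, Sum.inl v) ∨ e = s(Sum.inl u, Sum.inr v) ∨
         e = s(Sum.inr u, Sum.inl v) ∨ e = s(Sum.inr u, Sum.inr v))}

/-- `B` is E-separated from `A` given `C` in `G`:
`A_0` is σ-separated from `B_1` given `C_0 ∪ (C_1 \ B_1)` in the lifted dependency graph. -/
def DMG.ESep (G : DMG V) (A B C : Set V) : Prop :=
  G.lift.sigmaSep (Sum.inl '' A) (Sum.inr '' B)
    ((Sum.inl '' C) ∪ ((Sum.inr '' C) \ (Sum.inr '' B)))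

/-- The independence model `I_E^G` of E-separation triples. -/
def DMG.IE (G : DMG V) : Set (Set V × Set V × Set V) :=
  {t | G.ESep t.1 t.2.1 t.2.2}


/-- The latent projection of `G` onto the observed nodes `O`: a directed edge when there is
a non-trivial directed walk whose interior nodes are all latent, and a bidirected edge when
there is a non-trivial collider-free walk with arrowheads at both endpoints whose interior
nodes are all latent. -/
def DMG.latentProj (G : DMG V) (O : Set V) : DMG O where
  Ed := {e | ∃ p : G.Walk e.1.val e.2.val,
          p.IsDirected ∧ 0 < p.length ∧ ∀ x ∈ p.interior, x ∉ O}
  Ebi := {e | ∃ u v : O, e = s(u, v) ∧ ∃ p : G.Walk u.val v.val,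
          p.headAtStart ∧ p.headAtEnd ∧ p.NoColliders ∧ 0 < p.length ∧
          ∀ x ∈ p.interior, x ∉ O}

/-- The last edge of the walk `p` before entering `scc_G(w)` has an arrowhead at its
endpoint in `scc_G(w)` (vacuous if the walk never leaves `scc_G(w)`). -/
def DMG.lastEdgeInto (G : DMG V) {a b : V} (w : V) (p : G.Walk a b) : Prop :=
  (∀ x ∈ p.support, x ∈ G.scc w) ∨
  ∃ (x y : V) (t : LinkType) (h : G.linkOK x y t) (p₁ : G.Walk a x) (p₂ : G.Walk y b),
    p = p₁.append (.cons t h p₂) ∧ x ∉ G.scc w ∧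
    (∀ z ∈ p₂.support, z ∈ G.scc w) ∧ t.headR

/-- An (asymmetric) inducing path from `v` to `w`: a non-trivial path such that every
collider on it is an ancestor of `v` or `w`, every interior non-collider is unblockable,
and the last edge before entering `scc_G(w)` points into `scc_G(w)`. -/
def DMG.IsInducingPath (G : DMG V) {v w : V} (p : G.Walk v w) : Prop :=
  0 < p.length ∧ p.IsPath ∧
  p.CollidersIn (G.anc {v, w}) ∧ p.NoncollidersUnblockable ∧ G.lastEdgeInto w p

/-!
Read a σ-open walk backwards from its last node and remember, at each node reached, only the mark
that the preceding edge may have there. A latent node on a walk of the full graph either lies on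
a latent directed path to an observed node from which the projected walk goes on (`TailExit`), or
is entered by an arrowhead of a latent directed path or trek from such a node (`HeadExit`). The
delicate points are latent colliders and the unblockable non-colliders in `C` next to a latent
node: in both cases the latent node is an ancestor of `C`, hence has a latent directed path to
an observed ancestor of `C`, which serves as an open collider of the projected walk.

The lifted graph of the latent projection is the latent projection of the lifted graph, so
the statement on E-separation is an instance of the one on σ-separation.
-/

/-! ### Directed paths and treks through a set of nodes -/

namespace DMG

/-- There is a non-trivial directed walk from `u` to `v` with all intermediate nodes in `L`. -/
inductive DirectedThrough (G : DMG V) (L : Set V) : V → V → Prop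
  | single {u v : V} : (u, v) ∈ G.Ed → DirectedThrough G L u v
  | cons {u x v : V} : (u, x) ∈ G.Ed → x ∈ L → DirectedThrough G L x v → DirectedThrough G L u v

/-- There is a trek between `u` and `v` through `L`: a collider-free walk with arrowheads at both
ends and all intermediate nodes in `L`. The constructors read the walk from `u` on: arrowheads
pointing back to `u` (`left`), then a bidirected edge or a fork, then a directed walk to `v`. -/
inductive TrekThrough (G : DMG V) (L : Set V) : V → V → Prop
  | bi {u v : V} : s(u, v) ∈ G.Ebi → TrekThrough G L u v
  | biDirected {u x v : V} : s(u, x) ∈ G.Ebi → x ∈ L → G.DirectedThrough L x v →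
      TrekThrough G L u v
  | fork {u x v : V} : (x, u) ∈ G.Ed → x ∈ L → G.DirectedThrough L x v → TrekThrough G L u v
  | left {u x v : V} : (x, u) ∈ G.Ed → x ∈ L → TrekThrough G L x v → TrekThrough G L u v

variable {G : DMG V} {L : Set V} {u v w x : V}

theorem DirectedThrough.trans (huv : G.DirectedThrough L u v) (hv : v ∈ L)
    (hvw : G.DirectedThrough L v w) : G.DirectedThrough L u w := by
  induction huv with
  | single h => exact .cons h hv hvw
  | cons h hx _ ih => exact .cons h hx (ih hv hvw)

theorem DirectedThrough.ancestor (h : G.DirectedThrough L u v) : G.ancestor u v := by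
  induction h with
  | single h => exact .single h
  | cons h _ _ ih => exact .head h ih

theorem TrekThrough.trans_left (hxu : G.DirectedThrough L x u) (hx : x ∈ L)
    (hxv : G.TrekThrough L x v) : G.TrekThrough L u v := by
  induction hxu with
  | single h => exact .left h hx hxv
  | cons h hz _ ih => exact ih hz (.left h hx hxv)

theorem TrekThrough.trans_right (huv : G.TrekThrough L u v) (hv : v ∈ L)
    (hvw : G.DirectedThrough L v w) : G.TrekThrough L u w := by
  induction huv with
  | bi h => exact .biDirected h hv hvw
  | biDirected h hx hxv => exact .biDirected h hx (hxv.trans hv hvw)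
  | fork h hx hxv => exact .fork h hx (hxv.trans hv hvw)
  | left h hx _ ih => exact .left h hx (ih hv hvw)

theorem TrekThrough.of_fork (hx : x ∈ L) (hxu : G.DirectedThrough L x u)
    (hxv : G.DirectedThrough L x v) : G.TrekThrough L u v := by
  cases hxu with
  | single h => exact .fork h hx hxv
  | cons h hz hzu => exact .trans_left hzu hz (.fork h hx hxv)

theorem TrekThrough.symm (h : G.TrekThrough L u v) : G.TrekThrough L v u := by
  induction h with
  | bi h => exact .bi (Sym2.eq_swap ▸ h)
  | biDirected h hx hxv => exact .trans_left hxv hx (.bi (Sym2.eq_swap ▸ h))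
  | fork h hx hxv => exact .of_fork hx hxv (.single h)
  | left h hx _ ih => exact ih.trans_right hx (.single h)

/-! ### Edges of the latent projection -/

namespace Walk

theorem support_ne_nil (p : G.Walk u v) : p.support ≠ [] := by
  cases p <;> simp [support]

theorem dropLast_support_cons (t : LinkType) (h : G.linkOK u v t) (p : G.Walk v w) :
    (cons t h p).support.dropLast = u :: p.support.dropLast :=
  List.dropLast_cons_of_ne_nil p.support_ne_nil

theorem dropLast_support_of_length_pos {p : G.Walk u v} (hp : 0 < p.length) :
    p.support.dropLast = u :: p.interior := by
  cases p with
  | nil => simp [length] at hp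
  | cons t h q => exact dropLast_support_cons t h q

theorem forall_mem_interior_cons {t : LinkType} {h : G.linkOK u x t} {p : G.Walk x v}
    (hx : x ∈ L) (hlen : 0 < p.length) (hL : ∀ y ∈ p.interior, y ∈ L) :
    ∀ y ∈ (cons t h p).interior, y ∈ L := by
  change ∀ y ∈ p.support.dropLast, y ∈ L
  rw [dropLast_support_of_length_pos hlen, List.forall_mem_cons]
  exact ⟨hx, hL⟩

theorem IsDirected.eq_or_directedThrough {p : G.Walk u v} (hp : p.IsDirected)
    (hL : ∀ y ∈ p.support.dropLast, y ∈ L) : u = v ∨ u ∈ L ∧ G.DirectedThrough L u v := by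
  induction p with
  | nil => exact .inl rfl
  | cons t h q ih =>
    obtain ⟨rfl, hq⟩ := hp
    rw [dropLast_support_cons, List.forall_mem_cons] at hL
    refine .inr ⟨hL.1, ?_⟩
    obtain rfl | ⟨hx, hxv⟩ := ih hq hL.2
    · exact .single h
    · exact .cons h hx hxv

theorem IsDirected.directedThrough {p : G.Walk u v} (hp : p.IsDirected) (hlen : 0 < p.length)
    (hL : ∀ y ∈ p.interior, y ∈ L) : G.DirectedThrough L u v := by
  cases p with
  | nil => simp [length] at hlen
  | cons t h q =>
    obtain ⟨rfl, hq⟩ := hp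
    obtain rfl | ⟨hx, hxv⟩ := hq.eq_or_directedThrough hL
    · exact .single h
    · exact .cons h hx hxv

theorem IsDirected.noCollidersAux {p : G.Walk u v} (hp : p.IsDirected) (t : LinkType) :
    p.noCollidersAux t := by
  induction p generalizing t with
  | nil => trivial
  | cons _ h q ih =>
    obtain ⟨rfl, hq⟩ := hp
    exact ⟨fun hcol => hcol.2, ih hq _⟩

theorem IsDirected.headAtEndAux_fwd {p : G.Walk u v} (hp : p.IsDirected) :
    p.headAtEndAux .fwd := by
  induction p with
  | nil => trivial
  | cons _ h q ih =>
    obtain ⟨rfl, hq⟩ := hp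
    exact ih hq

theorem IsDirected.headAtEnd {p : G.Walk u v} (hp : p.IsDirected) (hlen : 0 < p.length) :
    p.headAtEnd := by
  cases p with
  | nil => simp [length] at hlen
  | cons _ h q =>
    obtain ⟨rfl, hq⟩ := hp
    exact hq.headAtEndAux_fwd

theorem isDirected_of_noCollidersAux {t : LinkType} (ht : t.headR) {p : G.Walk u v}
    (hp : p.noCollidersAux t) : p.IsDirected := by
  induction p generalizing t with
  | nil => trivial
  | cons t' h q ih =>
    obtain ⟨hcol, hq⟩ := hp
    cases t' with
    | fwd => exact ⟨rfl, ih (t := .fwd) trivial hq⟩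
    | bwd => exact absurd ⟨ht, trivial⟩ hcol
    | bi => exact absurd ⟨ht, trivial⟩ hcol

theorem headAtEnd.headAtEndAux {p : G.Walk u v} (hp : p.headAtEnd) (t : LinkType) :
    p.headAtEndAux t := by
  cases p with
  | nil => exact hp.elim
  | cons => exact hp

theorem NoColliders.noCollidersAux_bwd {p : G.Walk u v} (hp : p.NoColliders) :
    p.noCollidersAux .bwd := by
  cases p with
  | nil => trivial
  | cons => exact ⟨fun hcol => hcol.1, hp⟩

theorem trekThrough_of_headAtStart {p : G.Walk u v} (hstart : p.headAtStart)
    (hend : p.headAtEnd) (hcol : p.NoColliders) (hL : ∀ y ∈ p.interior, y ∈ L) :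
    G.TrekThrough L u v := by
  induction p with
  | nil => exact hstart.elim
  | @cons u x v t h q ih =>
    cases t with
    | fwd => exact hstart.elim
    | bi =>
      have hq : q.IsDirected := isDirected_of_noCollidersAux (t := .bi) trivial hcol
      obtain rfl | ⟨hx, hxv⟩ := hq.eq_or_directedThrough hL
      · exact .bi h
      · exact .biDirected h hx hxv
    | bwd =>
      cases q with
      | nil => exact hend.elim
      | cons t' h' q' =>
        have hL' := hL
        simp only [interior, support, List.tail_cons,
          List.dropLast_cons_of_ne_nil q'.support_ne_nil, List.forall_mem_cons] at hL'
        cases t' with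
        | fwd =>
          have hq' : q'.IsDirected := isDirected_of_noCollidersAux (t := .fwd) trivial hcol.2
          exact .fork h hL'.1 (IsDirected.directedThrough (p := .cons .fwd h' q') ⟨rfl, hq'⟩
            (Nat.succ_pos _) hL'.2)
        | bwd => exact .left h hL'.1 (ih trivial hend hcol.2 hL'.2)
        | bi => exact .left h hL'.1 (ih trivial hend hcol.2 hL'.2)

end Walk

theorem DirectedThrough.exists_walk (h : G.DirectedThrough L u v) :
    ∃ p : G.Walk u v, p.IsDirected ∧ 0 < p.length ∧ ∀ y ∈ p.interior, y ∈ L := by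
  induction h with
  | single h =>
    exact ⟨.cons .fwd h (.nil _), ⟨rfl, trivial⟩, Nat.succ_pos _,
      by simp [Walk.interior, Walk.support]⟩
  | cons h hx _ ih =>
    obtain ⟨p, hp, hlen, hL⟩ := ih
    exact ⟨.cons .fwd h p, ⟨rfl, hp⟩, Nat.succ_pos _, Walk.forall_mem_interior_cons hx hlen hL⟩

theorem DirectedThrough.exists_trek_walk {t : LinkType} (ht : t.headL) (h : G.linkOK u x t)
    (hx : x ∈ L) (hxv : G.DirectedThrough L x v) :
    ∃ p : G.Walk u v, p.headAtStart ∧ p.headAtEnd ∧ p.NoColliders ∧ 0 < p.length ∧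
      ∀ y ∈ p.interior, y ∈ L := by
  obtain ⟨p, hp, hlen, hL⟩ := hxv.exists_walk
  exact ⟨.cons t h p, ht, (hp.headAtEnd hlen).headAtEndAux t, hp.noCollidersAux t,
    Nat.succ_pos _, Walk.forall_mem_interior_cons hx hlen hL⟩

theorem TrekThrough.exists_walk (h : G.TrekThrough L u v) :
    ∃ p : G.Walk u v, p.headAtStart ∧ p.headAtEnd ∧ p.NoColliders ∧ 0 < p.length ∧
      ∀ y ∈ p.interior, y ∈ L := by
  induction h with
  | bi h =>
    exact ⟨.cons .bi h (.nil _), trivial, trivial, trivial, Nat.succ_pos _,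
      by simp [Walk.interior, Walk.support]⟩
  | biDirected h hx hxv => exact hxv.exists_trek_walk (t := .bi) trivial h hx
  | fork h hx hxv => exact hxv.exists_trek_walk (t := .bwd) trivial h hx
  | left h hx _ ih =>
    obtain ⟨p, -, hend, hcol, hlen, hL⟩ := ih
    exact ⟨.cons .bwd h p, trivial, hend.headAtEndAux .bwd, hcol.noCollidersAux_bwd,
      Nat.succ_pos _, Walk.forall_mem_interior_cons hx hlen hL⟩

theorem mem_latentProj_Ed {O : Set V} {u v : O} :
    (u, v) ∈ (G.latentProj O).Ed ↔ G.DirectedThrough Oᶜ u v :=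
  ⟨fun ⟨_, hp, hlen, hO⟩ => hp.directedThrough hlen hO, fun h => h.exists_walk⟩

theorem mem_latentProj_Ebi {O : Set V} {u v : O} :
    s(u, v) ∈ (G.latentProj O).Ebi ↔ G.TrekThrough Oᶜ u v := by
  constructor
  · rintro ⟨u', v', he, p, hstart, hend, hcol, -, hO⟩
    have htrek : G.TrekThrough Oᶜ u' v' := p.trekThrough_of_headAtStart hstart hend hcol hO
    obtain ⟨rfl, rfl⟩ | ⟨rfl, rfl⟩ := Sym2.eq_iff.1 he
    · exact htrek
    · exact htrek.symm
  · exact fun h => ⟨u, v, rfl, h.exists_walk⟩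

end DMG

/-- `H'` is, along the embedding `ι` of its nodes, the latent projection of `H` on the range of
`ι`. Working with an embedding rather than a subset makes the notion stable under lifting. -/
structure IsLatentProjection {W W' : Type} (H : DMG W) (H' : DMG W') (ι : W' → W) : Prop where
  injective : Function.Injective ι
  mem_Ed {u v : W'} : (u, v) ∈ H'.Ed ↔ H.DirectedThrough (Set.range ι)ᶜ (ι u) (ι v)
  mem_Ebi {u v : W'} : s(u, v) ∈ H'.Ebi ↔ H.TrekThrough (Set.range ι)ᶜ (ι u) (ι v)

theorem isLatentProjection_latentProj (G : DMG V) (O : Set V) :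
    IsLatentProjection G (G.latentProj O) Subtype.val where
  injective := Subtype.val_injective
  mem_Ed := by rw [Subtype.range_coe]; exact DMG.mem_latentProj_Ed
  mem_Ebi := by rw [Subtype.range_coe]; exact DMG.mem_latentProj_Ebi

/-! ### The lifted dependency graph -/

namespace DMG

/-- The node of `V` of which a node of the lifted graph is a copy. -/
def base : V ⊕ V → V := Sum.elim id id

theorem exists_base_eq_isRight_eq (v : V) (r : Bool) :
    ∃ x : V ⊕ V, base x = v ∧ x.isRight = r := by
  cases r
  · exact ⟨.inl v, rfl, rfl⟩
  · exact ⟨.inr v, rfl, rfl⟩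

theorem base_map {W : Type} (f : V → W) (x : V ⊕ V) : base (Sum.map f f x) = f (base x) := by
  cases x <;> rfl

theorem compl_range_map {W : Type} (f : V → W) :
    (Set.range (Sum.map f f))ᶜ = base ⁻¹' (Set.range f)ᶜ := by
  ext (x | x) <;> simp [base]

variable {G : DMG V} {L : Set V} {x y : V ⊕ V}

theorem mem_lift_Ed : (x, y) ∈ G.lift.Ed ↔ (base x, base y) ∈ G.Ed ∧ x.isRight ≤ y.isRight := by
  rcases x with x | x <;> rcases y with y | y <;> simp [lift, base]

theorem mem_lift_Ebi : s(x, y) ∈ G.lift.Ebi ↔ s(base x, base y) ∈ G.Ebi := by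
  constructor
  · rintro ⟨u, v, h, he | he | he | he⟩ <;>
      obtain ⟨rfl, rfl⟩ | ⟨rfl, rfl⟩ := Sym2.eq_iff.1 he <;>
      first | exact h | exact Sym2.eq_swap ▸ h
  · refine fun h => ⟨base x, base y, h, ?_⟩
    rcases x with x | x <;> rcases y with y | y <;> simp [base]

theorem DirectedThrough.of_lift (h : G.lift.DirectedThrough (base ⁻¹' L) x y) :
    G.DirectedThrough L (base x) (base y) ∧ x.isRight ≤ y.isRight := by
  induction h with
  | single h => exact ⟨.single (mem_lift_Ed.1 h).1, (mem_lift_Ed.1 h).2⟩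
  | cons h hz _ ih =>
    exact ⟨.cons (mem_lift_Ed.1 h).1 hz ih.1, (mem_lift_Ed.1 h).2.trans ih.2⟩

theorem DirectedThrough.lift {u v : V} (h : G.DirectedThrough L u v) (hx : base x = u)
    (hy : base y = v) (hxy : x.isRight ≤ y.isRight) :
    G.lift.DirectedThrough (base ⁻¹' L) x y := by
  induction h generalizing x with
  | single h =>
    subst hx hy
    exact .single (mem_lift_Ed.2 ⟨h, hxy⟩)
  | @cons u w v h hw _ ih =>
    subst hx hy
    obtain ⟨z, rfl, hz⟩ := exists_base_eq_isRight_eq w x.isRight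
    exact .cons (mem_lift_Ed.2 ⟨h, hz.ge⟩) hw (ih rfl rfl (hz ▸ hxy))

theorem directedThrough_lift : G.lift.DirectedThrough (base ⁻¹' L) x y ↔
    G.DirectedThrough L (base x) (base y) ∧ x.isRight ≤ y.isRight :=
  ⟨fun h => h.of_lift, fun h => h.1.lift rfl rfl h.2⟩

theorem TrekThrough.of_lift (h : G.lift.TrekThrough (base ⁻¹' L) x y) :
    G.TrekThrough L (base x) (base y) := by
  induction h with
  | bi h => exact .bi (mem_lift_Ebi.1 h)
  | biDirected h hz hzy => exact .biDirected (mem_lift_Ebi.1 h) hz hzy.of_lift.1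
  | fork h hz hzy => exact .fork (mem_lift_Ed.1 h).1 hz hzy.of_lift.1
  | left h hz _ ih => exact .left (mem_lift_Ed.1 h).1 hz ih

/-- All intermediate nodes of the lifted trek can be taken in the past copy, which has edges to
both copies. -/
theorem TrekThrough.lift {u v : V} (h : G.TrekThrough L u v) (hx : base x = u) (hy : base y = v) :
    G.lift.TrekThrough (base ⁻¹' L) x y := by
  induction h generalizing x with
  | bi h =>
    subst hx hy
    exact .bi (mem_lift_Ebi.2 h)
  | @biDirected u w v h hw hwv =>
    subst hx hy
    exact .biDirected (x := .inl w) (mem_lift_Ebi (y := .inl w).2 h) hw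
      (hwv.lift rfl rfl (Bool.false_le _))
  | @fork u w v h hw hwv =>
    subst hx hy
    exact .fork (x := .inl w) (mem_lift_Ed (x := .inl w).2 ⟨h, Bool.false_le _⟩) hw
      (hwv.lift rfl rfl (Bool.false_le _))
  | @left u w v h hw _ ih =>
    subst hx hy
    exact .left (x := .inl w) (mem_lift_Ed (x := .inl w).2 ⟨h, Bool.false_le _⟩) hw (ih rfl rfl)

theorem trekThrough_lift :
    G.lift.TrekThrough (base ⁻¹' L) x y ↔ G.TrekThrough L (base x) (base y) :=
  ⟨.of_lift, fun h => h.lift rfl rfl⟩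

end DMG

theorem IsLatentProjection.lift {W W' : Type} {H : DMG W} {H' : DMG W'} {ι : W' → W}
    (P : IsLatentProjection H H' ι) : IsLatentProjection H.lift H'.lift (Sum.map ι ι) where
  injective := Sum.map_injective.2 ⟨P.injective, P.injective⟩
  mem_Ed {u v} := by
    rw [DMG.compl_range_map, DMG.directedThrough_lift, DMG.mem_lift_Ed, P.mem_Ed, DMG.base_map,
      DMG.base_map, Sum.isRight_map, Sum.isRight_map]
  mem_Ebi {u v} := by
    rw [DMG.compl_range_map, DMG.trekThrough_lift, DMG.mem_lift_Ebi, P.mem_Ebi, DMG.base_map,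
      DMG.base_map]

/-! ### σ-open walks in terms of edge marks -/

/-- The mark of an edge at one of its nodes. A tail records whether the other node of the edge is
in the same strongly connected component; `endpoint` stands for the missing edge at an end of
a walk. -/
inductive EdgeMark
  | head
  | tail (inner : Prop)
  | endpoint

/-- The mark at `v` of a link of the given type from `u` to `v`. -/
def LinkType.markR (G : DMG V) (u v : V) : LinkType → EdgeMark
  | .bwd => .tail (u ∈ G.scc v)
  | _ => .head

/-- The mark at `u` of a link of the given type from `u` to `v`. -/
def LinkType.markL (G : DMG V) (u v : V) : LinkType → EdgeMark
  | .fwd => .tail (v ∈ G.scc u)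
  | _ => .head

namespace DMG

/-- The condition for a walk to be σ-open given `C` at a node `v` between two edges with the given
marks at `v`. Nothing is required at an end of the walk, in accordance with
`DMG.Walk.sigmaOpen`. -/
def Passable (G : DMG V) (C : Set V) (v : V) : EdgeMark → EdgeMark → Prop
  | .endpoint, _ => True
  | _, .endpoint => True
  | .head, .head => v ∈ G.anc C
  | .head, .tail p => v ∈ C → p
  | .tail p, .head => v ∈ C → p
  | .tail p, .tail q => v ∈ C → p ∧ q

/-- Some σ-open walk from `v` to `b` given `C` stays σ-open at `v` when it is preceded by an edge
with mark `m` at `v`. -/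
inductive OpensTo (G : DMG V) (C : Set V) (b : V) : V → EdgeMark → Prop
  | refl (m : EdgeMark) : OpensTo G C b b m
  | out {v w : V} {m : EdgeMark} : (v, w) ∈ G.Ed → G.Passable C v m (.tail (w ∈ G.scc v)) →
      OpensTo G C b w .head → OpensTo G C b v m
  | into {v w : V} {m : EdgeMark} : (w, v) ∈ G.Ed → G.Passable C v m .head →
      OpensTo G C b w (.tail (v ∈ G.scc w)) → OpensTo G C b v m
  | bi {v w : V} {m : EdgeMark} : s(v, w) ∈ G.Ebi → G.Passable C v m .head →
      OpensTo G C b w .head → OpensTo G C b v m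

variable {G : DMG V} {C L : Set V} {a b u v w x y : V} {m m₁ m₂ : EdgeMark} {p q : Prop}

theorem passable_mark_iff (t₁ t₂ : LinkType) :
    G.Passable C v (t₁.markR G u v) (t₂.markL G v w) ↔
      (colliderAt t₁ t₂ → v ∈ G.anc C) ∧
        (¬ colliderAt t₁ t₂ → ¬ unblockableAt G u v w t₁ t₂ → v ∉ C) := by
  cases t₁ <;> cases t₂ <;>
    simp [Passable, LinkType.markR, LinkType.markL, colliderAt, unblockableAt, LinkType.headR,
      LinkType.headL, LinkType.tailR, LinkType.tailL] <;> tauto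

theorem OpensTo.cons (t : LinkType) (h : G.linkOK v w t)
    (hpass : G.Passable C v m (t.markL G v w)) (hw : G.OpensTo C b w (t.markR G v w)) :
    G.OpensTo C b v m := by
  cases t with
  | fwd => exact .out h hpass hw
  | bwd => exact .into h hpass hw
  | bi => exact .bi h hpass hw

theorem OpensTo.of_sigmaOpenAux {p : G.Walk v b} {t : LinkType} (hp : p.sigmaOpenAux C u t) :
    G.OpensTo C b v (t.markR G u v) := by
  induction p generalizing u t with
  | nil => exact .refl _
  | cons t' h q ih => exact .cons t' h ((passable_mark_iff t t').2 hp.1) (ih hp.2)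

theorem OpensTo.exists_sigmaOpenAux (h : G.OpensTo C b v m) {t : LinkType}
    (hm : t.markR G u v = m) : ∃ p : G.Walk v b, p.sigmaOpenAux C u t := by
  induction h generalizing u t with
  | refl => exact ⟨.nil _, trivial⟩
  | out h hpass _ ih =>
    subst hm
    obtain ⟨p, hp⟩ := ih (t := .fwd) rfl
    exact ⟨.cons .fwd h p, (passable_mark_iff t .fwd).1 hpass, hp⟩
  | into h hpass _ ih =>
    subst hm
    obtain ⟨p, hp⟩ := ih (t := .bwd) rfl
    exact ⟨.cons .bwd h p, (passable_mark_iff t .bwd).1 hpass, hp⟩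
  | @bi v w _ h hpass _ ih =>
    subst hm
    obtain ⟨p, hp⟩ := ih (u := v) (t := .bi) rfl
    exact ⟨.cons .bi h p, (passable_mark_iff t .bi).1 hpass, hp⟩

theorem exists_sigmaOpen_iff_opensTo :
    (∃ p : G.Walk a b, p.sigmaOpen C) ↔ G.OpensTo C b a .endpoint := by
  constructor
  · rintro ⟨_ | ⟨t, h, q⟩, hp⟩
    · exact .refl _
    · exact .cons t h trivial (.of_sigmaOpenAux hp)
  · intro h
    cases h with
    | refl => exact ⟨.nil _, trivial⟩
    | out h _ hw =>
      obtain ⟨p, hp⟩ := hw.exists_sigmaOpenAux (t := .fwd) rfl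
      exact ⟨.cons .fwd h p, hp⟩
    | into h _ hw =>
      obtain ⟨p, hp⟩ := hw.exists_sigmaOpenAux (t := .bwd) rfl
      exact ⟨.cons .bwd h p, hp⟩
    | bi h _ hw =>
      obtain ⟨p, hp⟩ := hw.exists_sigmaOpenAux (u := a) (t := .bi) rfl
      exact ⟨.cons .bi h p, hp⟩

theorem sigmaSep_iff_not_opensTo {A B : Set V} :
    G.sigmaSep A B C ↔ ∀ a ∈ A, ∀ b ∈ B, ¬ G.OpensTo C b a .endpoint := by
  simp only [sigmaSep, ← exists_sigmaOpen_iff_opensTo, not_exists]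

theorem Passable.symm (h : G.Passable C v m₁ m₂) : G.Passable C v m₂ m₁ := by
  cases m₁ <;> cases m₂ <;> simp_all [Passable]

theorem Passable.tail_mono (hpq : v ∈ C → p → q) (h : G.Passable C v (.tail p) m) :
    G.Passable C v (.tail q) m := by
  cases m <;> simp_all [Passable]

theorem passable_tail_of_notMem (hv : v ∉ C) (m : EdgeMark) (p : Prop) :
    G.Passable C v m (.tail p) := by
  cases m <;> simp [Passable, hv]

theorem OpensTo.tail_mono (hpq : v ∈ C → p → q) (h : G.OpensTo C b v (.tail p)) :
    G.OpensTo C b v (.tail q) := by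
  cases h with
  | refl => exact .refl _
  | out h hpass hw => exact .out h (hpass.tail_mono hpq) hw
  | into h hpass hw => exact .into h (hpass.tail_mono hpq) hw
  | bi h hpass hw => exact .bi h (hpass.tail_mono hpq) hw

theorem DirectedThrough.mem_scc_of_edge (hux : (u, x) ∈ G.Ed) (hxv : G.DirectedThrough L x v)
    (hv : v ∈ G.scc u) : x ∈ G.scc u :=
  ⟨hxv.ancestor.trans hv.1, .single hux⟩

theorem DirectedThrough.opensTo_out (hLC : Disjoint L C) (h : G.DirectedThrough L x y)
    (hpass : G.Passable C x m (.tail (y ∈ G.scc x))) (hy : G.OpensTo C b y .head) :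
    G.OpensTo C b x m := by
  induction h generalizing m with
  | single h => exact .out h hpass hy
  | cons h hz hzy ih =>
    have hout := ih (passable_tail_of_notMem (hLC.notMem_of_mem_left hz) .head _) hy
    exact .out h (hpass.symm.tail_mono fun _ => hzy.mem_scc_of_edge h).symm hout

theorem DirectedThrough.opensTo_into (hLC : Disjoint L C) (h : G.DirectedThrough L y x)
    (hpass : G.Passable C x m .head) (hy : G.OpensTo C b y (.tail (x ∈ G.scc y))) :
    G.OpensTo C b x m := by
  induction h with
  | single h => exact .into h hpass hy
  | cons h hz hzx ih =>
    have hy' := hy.tail_mono fun _ => hzx.mem_scc_of_edge h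
    exact ih hpass
      (.into h (passable_tail_of_notMem (hLC.notMem_of_mem_left hz) .head _).symm hy')

theorem TrekThrough.opensTo (hLC : Disjoint L C) (h : G.TrekThrough L x y)
    (hpass : G.Passable C x m .head) (hy : G.OpensTo C b y .head) : G.OpensTo C b x m := by
  induction h generalizing m with
  | bi h => exact .bi h hpass hy
  | biDirected h hz hzy =>
    have hzC := hLC.notMem_of_mem_left hz
    exact .bi h hpass (hzy.opensTo_out hLC (passable_tail_of_notMem hzC .head _) hy)
  | fork h hz hzy =>
    have hzC := hLC.notMem_of_mem_left hz
    exact .into h hpass (hzy.opensTo_out hLC (passable_tail_of_notMem hzC (.tail _) _) hy)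
  | left h hz _ ih =>
    have hzC := hLC.notMem_of_mem_left hz
    exact .into h hpass (ih (passable_tail_of_notMem hzC .head _).symm hy)

end DMG

/-! ### σ-open walks and latent projections -/

section Projection

variable {W W' : Type} {H : DMG W} {H' : DMG W'} {ι : W' → W} {C : Set W'} {b u v : W'}
  {x y : W} {m : EdgeMark}

namespace IsLatentProjection

theorem eq_or_exists_directedThrough (P : IsLatentProjection H H' ι) (h : H.ancestor x (ι v)) :
    x = ι v ∨ ∃ o, H.DirectedThrough (Set.range ι)ᶜ x (ι o) ∧ H'.ancestor o v := by
  induction h using Relation.ReflTransGen.head_induction_on with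
  | refl => exact .inl rfl
  | @head x z hxz _ ih =>
    right
    obtain rfl | ⟨o, hzo, hov⟩ := ih
    · exact ⟨v, .single hxz, .refl⟩
    · by_cases hz : z ∈ Set.range ι
      · obtain ⟨z, rfl⟩ := hz
        exact ⟨z, .single hxz, .head (P.mem_Ed.2 hzo) hov⟩
      · exact ⟨o, .cons hxz hz hzo, hov⟩

theorem exists_directedThrough (P : IsLatentProjection H H' ι) (hx : x ∈ (Set.range ι)ᶜ)
    (h : H.ancestor x (ι v)) :
    ∃ o, H.DirectedThrough (Set.range ι)ᶜ x (ι o) ∧ H'.ancestor o v := by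
  obtain rfl | hexists := P.eq_or_exists_directedThrough h
  · exact absurd (Set.mem_range_self v) hx
  · exact hexists

theorem ancestor_iff (P : IsLatentProjection H H' ι) :
    H.ancestor (ι u) (ι v) ↔ H'.ancestor u v := by
  constructor
  · intro h
    obtain heq | ⟨o, huo, hov⟩ := P.eq_or_exists_directedThrough h
    · rw [P.injective heq]
      exact .refl
    · exact .head (P.mem_Ed.2 huo) hov
  · intro h
    induction h with
    | refl => exact .refl
    | tail _ h ih => exact ih.trans (P.mem_Ed.1 h).ancestor

theorem mem_scc_iff (P : IsLatentProjection H H' ι) : ι u ∈ H.scc (ι v) ↔ u ∈ H'.scc v :=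
  and_congr P.ancestor_iff P.ancestor_iff

theorem mem_anc_image_iff (P : IsLatentProjection H H' ι) :
    ι v ∈ H.anc (ι '' C) ↔ v ∈ H'.anc C := by
  simp only [DMG.anc, Set.mem_ofPred_eq, Set.exists_mem_image, P.ancestor_iff]

theorem passable_image_iff (P : IsLatentProjection H H' ι) {m₁ m₂ : EdgeMark} :
    H.Passable (ι '' C) (ι v) m₁ m₂ ↔ H'.Passable C v m₁ m₂ := by
  cases m₁ <;> cases m₂ <;>
    simp only [DMG.Passable, P.mem_anc_image_iff, P.injective.mem_set_image]

theorem disjoint_compl_range_image (ι : W' → W) (C : Set W') :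
    Disjoint (Set.range ι)ᶜ (ι '' C) :=
  Set.disjoint_compl_left_iff_subset.2 (Set.image_subset_range ι C)

theorem opensTo_image (P : IsLatentProjection H H' ι) (h : H'.OpensTo C b v m) :
    H.OpensTo (ι '' C) (ι b) (ι v) m := by
  have hLC := disjoint_compl_range_image ι C
  induction h with
  | refl => exact .refl _
  | out h hpass _ ih =>
    rw [← P.passable_image_iff, ← P.mem_scc_iff] at hpass
    exact (P.mem_Ed.1 h).opensTo_out hLC hpass ih
  | into h hpass _ ih =>
    rw [← P.passable_image_iff] at hpass
    rw [← P.mem_scc_iff] at ih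
    exact (P.mem_Ed.1 h).opensTo_into hLC hpass ih
  | bi h hpass _ ih =>
    rw [← P.passable_image_iff] at hpass
    exact (P.mem_Ebi.1 h).opensTo hLC hpass ih

end IsLatentProjection

/-- A walk of the projection to `b` can be continued from `x` along a directed path out of `x`
through latent nodes. -/
def TailExit (H : DMG W) (H' : DMG W') (ι : W' → W) (C : Set W') (b : W') (x : W) : Prop :=
  ∃ o, H.DirectedThrough (Set.range ι)ᶜ x (ι o) ∧ H'.OpensTo C b o .head

/-- A walk of the projection to `b` can be continued from `x` along a directed path into `x` or
a trek through latent nodes. The mark `tail False` asks for a node that may be left by any tail,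
whichever edge of the projection the directed path becomes part of. -/
def HeadExit (H : DMG W) (H' : DMG W') (ι : W' → W) (C : Set W') (b : W') (x : W) : Prop :=
  (∃ v, H.DirectedThrough (Set.range ι)ᶜ (ι v) x ∧ H'.OpensTo C b v (.tail False)) ∨
    ∃ o, H.TrekThrough (Set.range ι)ᶜ x (ι o) ∧ H'.OpensTo C b o .head

/-- What remains in the projection of an open walk from `x` to `ι b` that may be preceded by
an edge with mark `m` at `x`. A head exit from a latent node excludes the mark `head`, which
would make the node a collider. -/
inductive Shadow (H : DMG W) (H' : DMG W') (ι : W' → W) (C : Set W') (b : W') :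
    W → EdgeMark → Prop
  | observed {v : W'} {m : EdgeMark} : H'.OpensTo C b v m → Shadow H H' ι C b (ι v) m
  | tailExit {x : W} {m : EdgeMark} : x ∈ (Set.range ι)ᶜ → TailExit H H' ι C b x →
      Shadow H H' ι C b x m
  | headExit {x : W} {m : EdgeMark} : x ∈ (Set.range ι)ᶜ → HeadExit H H' ι C b x → m ≠ .head →
      Shadow H H' ι C b x m

theorem TailExit.headExit (h : TailExit H H' ι C b x) (hx : x ∈ (Set.range ι)ᶜ)
    (hxy : H.DirectedThrough (Set.range ι)ᶜ x y) : HeadExit H H' ι C b y := by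
  obtain ⟨o, hxo, ho⟩ := h
  exact .inr ⟨o, .of_fork hx hxy hxo, ho⟩

theorem HeadExit.trans (h : HeadExit H H' ι C b x) (hx : x ∈ (Set.range ι)ᶜ)
    (hxy : H.DirectedThrough (Set.range ι)ᶜ x y) : HeadExit H H' ι C b y := by
  obtain ⟨v, hvx, hv⟩ | ⟨o, hxo, ho⟩ := h
  · exact .inl ⟨v, hvx.trans hx hxy, hv⟩
  · exact .inr ⟨o, .trans_left hxy hx hxo, ho⟩

namespace IsLatentProjection

theorem opensTo_of_headExit (P : IsLatentProjection H H' ι) (h : HeadExit H H' ι C b (ι v))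
    (hpass : H'.Passable C v m .head) : H'.OpensTo C b v m := by
  obtain ⟨u, huv, hu⟩ | ⟨o, hvo, ho⟩ := h
  · exact .into (P.mem_Ed.2 huv) hpass (hu.tail_mono fun _ => False.elim)
  · exact .bi (P.mem_Ebi.2 hvo) hpass ho

theorem tailExit_of_headExit (P : IsLatentProjection H H' ι) (h : HeadExit H H' ι C b x)
    (hx : x ∈ (Set.range ι)ᶜ) (hanc : x ∈ H.anc (ι '' C)) : TailExit H H' ι C b x := by
  obtain ⟨_, ⟨c, hc, rfl⟩, hxc⟩ := hanc
  obtain ⟨o, hxo, hoc⟩ := P.exists_directedThrough hx hxc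
  exact ⟨o, hxo, P.opensTo_of_headExit (h.trans hx hxo) ⟨c, hc, hoc⟩⟩

theorem shadow_of_headExit (P : IsLatentProjection H H' ι) (h : HeadExit H H' ι C b x)
    (hpass : H.Passable (ι '' C) x m .head) : Shadow H H' ι C b x m := by
  by_cases hx : x ∈ Set.range ι
  · obtain ⟨v, rfl⟩ := hx
    exact .observed (P.opensTo_of_headExit h (P.passable_image_iff.1 hpass))
  · cases m with
    | head => exact .tailExit hx (P.tailExit_of_headExit h hx hpass)
    | tail => exact .headExit hx h nofun
    | endpoint => exact .headExit hx h nofun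

/-- If `v ∈ C` is passed as an unblockable non-collider, the path out of `y` may end at a node
outside the strongly connected component of `v`; another path from `y` then leads back to `v`, and
its first observed node is an open collider. -/
theorem opensTo_of_edge_of_tailExit (P : IsLatentProjection H H' ι) (hvy : (ι v, y) ∈ H.Ed)
    (hy : y ∈ (Set.range ι)ᶜ) (h : TailExit H H' ι C b y)
    (hpass : H.Passable (ι '' C) (ι v) m (.tail (y ∈ H.scc (ι v)))) : H'.OpensTo C b v m := by
  rw [P.passable_image_iff] at hpass
  by_cases hvC : v ∈ C ∧ y ∈ H.scc (ι v)
  · obtain ⟨hvC, hscc⟩ := hvC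
    obtain ⟨o, hyo, hov⟩ := P.exists_directedThrough hy hscc.1
    have hvo : (v, o) ∈ H'.Ed := P.mem_Ed.2 (.cons hvy hy hyo)
    have ho : H'.OpensTo C b o .head :=
      P.opensTo_of_headExit (h.headExit hy hyo) ⟨v, hvC, hov⟩
    exact .out hvo (hpass.symm.tail_mono fun _ _ => ⟨hov, .single hvo⟩).symm ho
  · obtain ⟨o, hyo, ho⟩ := h
    exact .out (P.mem_Ed.2 (.cons hvy hy hyo))
      (hpass.symm.tail_mono fun hv hscc => (hvC ⟨hv, hscc⟩).elim).symm ho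

theorem shadow_out (P : IsLatentProjection H H' ι) (hxy : (x, y) ∈ H.Ed)
    (hpass : H.Passable (ι '' C) x m (.tail (y ∈ H.scc x))) (hy : Shadow H H' ι C b y .head) :
    Shadow H H' ι C b x m := by
  by_cases hx : x ∈ Set.range ι
  · obtain ⟨v, rfl⟩ := hx
    refine .observed ?_
    cases hy with
    | observed hw =>
      rw [P.passable_image_iff, P.mem_scc_iff] at hpass
      exact .out (P.mem_Ed.2 (.single hxy)) hpass hw
    | tailExit hy hexit => exact P.opensTo_of_edge_of_tailExit hxy hy hexit hpass
    | headExit _ _ hne => exact absurd rfl hne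
  · refine .tailExit hx ?_
    cases hy with
    | observed hw => exact ⟨_, .single hxy, hw⟩
    | tailExit hy hexit =>
      obtain ⟨o, hyo, ho⟩ := hexit
      exact ⟨o, .cons hxy hy hyo, ho⟩
    | headExit _ _ hne => exact absurd rfl hne

theorem shadow_of_edge_of_opensTo (P : IsLatentProjection H H' ι) (hx : x ∈ (Set.range ι)ᶜ)
    (hvx : (ι v, x) ∈ H.Ed) (hpass : H.Passable (ι '' C) x m .head)
    (hv : H'.OpensTo C b v (.tail (x ∈ H.scc (ι v)))) : Shadow H H' ι C b x m := by
  by_cases hvC : v ∈ C ∧ x ∈ H.scc (ι v)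
  · obtain ⟨hvC, hscc⟩ := hvC
    obtain ⟨o, hxo, hov⟩ := P.exists_directedThrough hx hscc.1
    have hvo : (v, o) ∈ H'.Ed := P.mem_Ed.2 (.cons hvx hx hxo)
    have ho : H'.OpensTo C b o .head :=
      .into hvo ⟨v, hvC, hov⟩ (hv.tail_mono fun _ _ => ⟨hov, .single hvo⟩)
    exact .tailExit hx ⟨o, hxo, ho⟩
  · exact P.shadow_of_headExit
      (.inl ⟨v, .single hvx, hv.tail_mono fun hv hscc => hvC ⟨hv, hscc⟩⟩) hpass

theorem shadow_into (P : IsLatentProjection H H' ι) (hyx : (y, x) ∈ H.Ed)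
    (hpass : H.Passable (ι '' C) x m .head) (hy : Shadow H H' ι C b y (.tail (x ∈ H.scc y))) :
    Shadow H H' ι C b x m := by
  cases hy with
  | @observed v _ hv =>
    by_cases hx : x ∈ Set.range ι
    · obtain ⟨u, rfl⟩ := hx
      rw [P.mem_scc_iff] at hv
      exact .observed (.into (P.mem_Ed.2 (.single hyx)) (P.passable_image_iff.1 hpass) hv)
    · exact P.shadow_of_edge_of_opensTo hx hyx hpass hv
  | tailExit hy hexit => exact P.shadow_of_headExit (hexit.headExit hy (.single hyx)) hpass
  | headExit hy hexit _ => exact P.shadow_of_headExit (hexit.trans hy (.single hyx)) hpass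

theorem shadow_bi (P : IsLatentProjection H H' ι) (hxy : s(x, y) ∈ H.Ebi)
    (hpass : H.Passable (ι '' C) x m .head) (hy : Shadow H H' ι C b y .head) :
    Shadow H H' ι C b x m := by
  refine P.shadow_of_headExit (.inr ?_) hpass
  cases hy with
  | observed hv => exact ⟨_, .bi hxy, hv⟩
  | tailExit hy hexit =>
    obtain ⟨o, hyo, ho⟩ := hexit
    exact ⟨o, .biDirected hxy hy hyo, ho⟩
  | headExit _ _ hne => exact absurd rfl hne

theorem shadow_of_opensTo (P : IsLatentProjection H H' ι)
    (h : H.OpensTo (ι '' C) (ι b) x m) : Shadow H H' ι C b x m := by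
  induction h with
  | refl m => exact .observed (.refl m)
  | out h hpass _ ih => exact P.shadow_out h hpass ih
  | into h hpass _ ih => exact P.shadow_into h hpass ih
  | bi h hpass _ ih => exact P.shadow_bi h hpass ih

theorem opensTo_of_shadow (P : IsLatentProjection H H' ι) (h : Shadow H H' ι C b (ι v) m) :
    H'.OpensTo C b v m := by
  generalize hx : ι v = x at h
  cases h with
  | observed h => exact P.injective hx ▸ h
  | tailExit hlat => exact absurd ⟨v, hx⟩ hlat
  | headExit hlat => exact absurd ⟨v, hx⟩ hlat

theorem opensTo_image_iff (P : IsLatentProjection H H' ι) :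
    H.OpensTo (ι '' C) (ι b) (ι v) m ↔ H'.OpensTo C b v m :=
  ⟨fun h => P.opensTo_of_shadow (P.shadow_of_opensTo h), P.opensTo_image⟩

theorem sigmaSep_image_iff (P : IsLatentProjection H H' ι) {A B : Set W'} :
    H.sigmaSep (ι '' A) (ι '' B) (ι '' C) ↔ H'.sigmaSep A B C := by
  simp only [DMG.sigmaSep_iff_not_opensTo, Set.forall_mem_image, P.opensTo_image_iff]

theorem ESep_image_iff (P : IsLatentProjection H H' ι) {A B : Set W'} :
    H.ESep (ι '' A) (ι '' B) (ι '' C) ↔ H'.ESep A B C := by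
  have image_inl (S : Set W') : Sum.inl '' (ι '' S) = Sum.map ι ι '' (Sum.inl '' S) := by
    simp only [Set.image_image, Sum.map_inl]
  have image_inr (S : Set W') : Sum.inr '' (ι '' S) = Sum.map ι ι '' (Sum.inr '' S) := by
    simp only [Set.image_image, Sum.map_inr]
  rw [DMG.ESep, DMG.ESep, ← P.lift.sigmaSep_image_iff, Set.image_union,
    Set.image_sdiff P.lift.injective]
  simp only [image_inl, image_inr]

end IsLatentProjection

end Projection

theorem latent_projection_preserves_general (G : DMG V) (O A B C : Set V)
    (hA : A ⊆ O) (hB : B ⊆ O) (hC : C ⊆ O) :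
    (A, B, C) ∈ G.IE ↔
      ((Subtype.val ⁻¹' A : Set O), (Subtype.val ⁻¹' B : Set O),
        (Subtype.val ⁻¹' C : Set O)) ∈ (G.latentProj O).IE := by
  have image_preimage {S : Set V} (hS : S ⊆ O) :
      Subtype.val '' (Subtype.val ⁻¹' S : Set O) = S := by
    rwa [Subtype.image_preimage_val, Set.inter_eq_right]
  change G.ESep A B C ↔ (G.latentProj O).ESep _ _ _
  rw [← (isLatentProjection_latentProj G O).ESep_image_iff, image_preimage hA, image_preimage hB,
    image_preimage hC]

/-- Marginalization preserves the E-separation model: for sets of observed nodes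
(`O` observed, `Oᶜ` latent), membership in `I_E` of the full directed graph coincides
with membership in `I_E` of its latent projection. -/
theorem latent_projection_preserves {V : Type} [Fintype V] (G : DMG V)
    (hG : G.Ebi = ∅) (O : Set V) (A B C : Set V)
    (hA : A ⊆ O) (hB : B ⊆ O) (hC : C ⊆ O) (hAC : A ∩ C = ∅) :
    (A, B, C) ∈ G.IE ↔
      ((Subtype.val ⁻¹' A : Set O), (Subtype.val ⁻¹' B : Set O),
        (Subtype.val ⁻¹' C : Set O)) ∈ (G.latentProj O).IE := by
  exact latent_projection_preserves_general G O A B C hA hB hC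

end ESepPaper
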